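/- Suppose F, D and E are subsets of ℤ² such that F is finite and F ⊕ D = E. If D is 1-periodic and E is periodic, then there exists a periodic set D' ⊆ ℤ² such that F ⊕ D' = E. -/

import Mathlib

/-- `F ⊕ C = E` : every sum `f + c` (with `f ∈ F`, `c ∈ C`) lies in `E`, and every
element of `E` can be uniquely expressed as `f + c` with `f ∈ F` and `c ∈ C`. -/
def TileOplus (F C E : Set (ℤ × ℤ)) : Prop :=
  (∀ f ∈ F, ∀ c ∈ C, f + c ∈ E) ∧
    ∀ e ∈ E, ∃! p : (ℤ × ℤ) × (ℤ × ℤ), p.1 ∈ F ∧ p.2 ∈ C ∧ p.1 + p.2 = e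

/-- A set `E ⊆ ℤ²` is periodic if `E + Λ = E` for some finite index subgroup `Λ ⊆ ℤ²`. -/
def IsPeriodicSet (E : Set (ℤ × ℤ)) : Prop :=
  ∃ Λ : AddSubgroup (ℤ × ℤ), Λ.FiniteIndex ∧ ∀ h ∈ Λ, ∀ x : ℤ × ℤ, x + h ∈ E ↔ x ∈ E

/-- A set `E ⊆ ℤ²` is 1-periodic if `E + h = E` for some nonzero `h ∈ ℤ²`. -/
def IsOnePeriodicSet (E : Set (ℤ × ℤ)) : Prop :=
  ∃ h : ℤ × ℤ, h ≠ 0 ∧ ∀ x : ℤ × ℤ, x + h ∈ E ↔ x ∈ E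

/-!
Let `D` be invariant under `h ≠ 0`, and let `L : ℤ² → ℤ` be a nonzero homomorphism killing `h`.
Since `⟨h⟩` has finite index in `ker L`, a strip `a ≤ L x < b` meets only finitely many cosets of
`⟨h⟩`, so there are only finitely many possible traces of `D` on translates of a strip. By
pigeonhole two translates along periods of `E` carry the same trace. Cutting `D` along one of them
and repeating the piece up to the other one gives `D'`. If the strip is at least as wide as
`L '' F`, then `D'` looks around each point like `D` around some point congruent modulo the periods
of `E`, so that `F ⊕ D' = E`.
-/

section

open AddAction AddSubgroup Set
open scoped Pointwise

variable {G : Type*} [AddCommGroup G] {F D D' E : Set G} {L : G →+ ℤ}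

/-- `F ⊕ D = E` for subsets of an abelian group, as bijectivity of addition `F × D → E`. -/
def IsTiling (F D E : Set G) : Prop :=
  BijOn (fun p : G × G ↦ p.1 + p.2) (F ×ˢ D) E

theorem mem_stabilizer_iff_add_mem {g : G} :
    g ∈ stabilizer G D ↔ ∀ x, x + g ∈ D ↔ x ∈ D := by
  simp only [mem_stabilizer_set, vadd_eq_add, add_comm g]

theorem coe_mem_image_mk_stabilizer {x : G} :
    (x : G ⧸ stabilizer G D) ∈ QuotientAddGroup.mk '' D ↔ x ∈ D := by
  refine ⟨?_, mem_image_of_mem _⟩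
  rintro ⟨y, hy, hyx⟩
  have hxy := mem_stabilizer_iff_add_mem.1 (QuotientAddGroup.eq.1 hyx) y
  rw [add_neg_cancel_left] at hxy
  exact hxy.2 hy

theorem isTiling_iff : IsTiling F D E ↔
    ∀ e, (e ∈ E ↔ {f ∈ F | e - f ∈ D}.Nonempty) ∧ {f ∈ F | e - f ∈ D}.Subsingleton := by
  constructor
  · rintro ⟨hmaps, hinj, hsurj⟩ e
    refine ⟨⟨fun he ↦ ?_, ?_⟩, ?_⟩
    · obtain ⟨⟨f, d⟩, ⟨hf, hd⟩, rfl⟩ := hsurj he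
      exact ⟨f, hf, by simpa only [add_sub_cancel_left] using hd⟩
    · rintro ⟨f, hf, hd⟩
      simpa only [add_sub_cancel] using hmaps (mk_mem_prod hf hd)
    · rintro f ⟨hf, hd⟩ f' ⟨hf', hd'⟩
      have hpair := hinj (mk_mem_prod hf hd) (mk_mem_prod hf' hd')
        (by simp only [add_sub_cancel])
      exact congrArg Prod.fst hpair
  · intro h
    refine ⟨?_, ?_, ?_⟩
    · rintro ⟨f, d⟩ ⟨hf, hd⟩
      exact (h _).1.2 ⟨f, hf, by simpa only [add_sub_cancel_left] using hd⟩
    · rintro ⟨f, d⟩ ⟨hf, hd⟩ ⟨f', d'⟩ ⟨hf', hd'⟩ (heq : f + d = f' + d')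
      obtain rfl : f = f' := (h (f + d)).2 ⟨hf, by simpa only [add_sub_cancel_left] using hd⟩
        ⟨hf', by simpa only [heq, add_sub_cancel_left] using hd'⟩
      rw [add_left_cancel heq]
    · intro e he
      obtain ⟨f, hf, hd⟩ := (h e).1.1 he
      exact ⟨(f, e - f), ⟨hf, hd⟩, add_sub_cancel f e⟩

theorem IsTiling.of_locally_eq (h : IsTiling F D E)
    (hloc : ∀ e, ∃ e', (e ∈ E ↔ e' ∈ E) ∧ ∀ f ∈ F, e - f ∈ D' ↔ e' - f ∈ D) :
    IsTiling F D' E := by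
  rw [isTiling_iff] at h ⊢
  intro e
  obtain ⟨e', hE, hD⟩ := hloc e
  have hfib : {f ∈ F | e - f ∈ D'} = {f ∈ F | e' - f ∈ D} :=
    ext fun f ↦ and_congr_right (hD f)
  rw [hE, hfib]
  exact h e'

theorem finite_image_mk_preimage {A : Type*} [AddGroup A] (φ : G →+ A) (H : AddSubgroup G)
    [H.IsFiniteRelIndex φ.ker] {S : Set A} (hS : S.Finite) :
    (QuotientAddGroup.mk '' (φ ⁻¹' S) : Set (G ⧸ H)).Finite := by
  have hker : (QuotientAddGroup.mk '' (φ.ker : Set G) : Set (G ⧸ H)).Finite := by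
    have hcard : Nat.card (φ.ker.map (QuotientAddGroup.mk' H)) ≠ 0 := by
      rw [← relIndex_ker, QuotientAddGroup.ker_mk']
      exact relIndex_ne_zero
    exact Nat.finite_of_card_ne_zero hcard
  rw [← biUnion_preimage_singleton, image_iUnion₂]
  refine hS.biUnion fun a _ ↦ ?_
  obtain hempty | ⟨x₀, hx₀⟩ := (φ ⁻¹' {a}).eq_empty_or_nonempty
  · simp only [hempty, image_empty, finite_empty]
  · refine (hker.image ((x₀ : G ⧸ H) + ·)).subset ?_
    rintro _ ⟨x, hx, rfl⟩
    refine ⟨_, ⟨-x₀ + x, ?_, rfl⟩, ?_⟩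
    · rw [SetLike.mem_coe, AddMonoidHom.mem_ker, map_add, map_neg, hx, hx₀, neg_add_cancel]
    · simp only [← QuotientAddGroup.mk_add, add_neg_cancel_left]

theorem isFiniteRelIndex_of_inf_le {A : Type*} [AddGroup A] {H J K : AddSubgroup A}
    [H.IsFiniteRelIndex K] (hle : H ⊓ K ≤ J) : J.IsFiniteRelIndex K := by
  have : (H ⊓ K).IsFiniteRelIndex K := ⟨inf_relIndex_right H K ▸ relIndex_ne_zero⟩
  exact isFiniteRelIndex_of_le_left K hle

theorem finiteIndex_of_mem_of_apply_ne_zero {K : AddSubgroup G} [K.IsFiniteRelIndex L.ker]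
    {g : G} (hg : g ∈ K) (hLg : L g ≠ 0) : K.FiniteIndex := by
  have hmap : (K.map L).index ≠ 0 := by
    have hle : zmultiples (L g) ≤ K.map L := zmultiples_le_of_mem (mem_map_of_mem L hg)
    refine ne_zero_of_dvd_ne_zero ?_ (index_dvd_of_le hle)
    rwa [Int.index_zmultiples, Int.natAbs_ne_zero]
  rw [index_map] at hmap
  refine ⟨?_⟩
  rw [← relIndex_mul_index (le_sup_right : K ≤ L.ker ⊔ K), relIndex_sup_right, sup_comm]
  exact mul_ne_zero relIndex_ne_zero (left_ne_zero_of_mul hmap)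

theorem exists_lt_forall_add_zsmul_mem_iff {S : Set G}
    (hS : (QuotientAddGroup.mk '' S : Set (G ⧸ stabilizer G D)).Finite) (v : G) :
    ∃ j k : ℤ, j < k ∧ ∀ x ∈ S, x + j • v ∈ D ↔ x + k • v ∈ D := by
  have := hS.to_subtype
  let trace (k : ℤ) (y : (QuotientAddGroup.mk '' S : Set (G ⧸ stabilizer G D))) : Prop :=
    y.1 + (k • v : G) ∈ QuotientAddGroup.mk '' D
  obtain ⟨j, k, hne, heq⟩ := Finite.exists_ne_map_eq_of_infinite trace
  have hjk : ∀ x ∈ S, x + j • v ∈ D ↔ x + k • v ∈ D := fun x hx ↦ by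
    have hx' := iff_of_eq (congrFun heq ⟨x, mem_image_of_mem _ hx⟩)
    simpa only [trace, ← QuotientAddGroup.mk_add, coe_mem_image_mk_stabilizer] using hx'
  obtain hlt | hlt := hne.lt_or_gt
  · exact ⟨j, k, hlt, hjk⟩
  · exact ⟨k, j, hlt, fun x hx ↦ (hjk x hx).symm⟩

theorem exists_recurrent_strip [(stabilizer G D).IsFiniteRelIndex L.ker] (v : G) (M : ℤ) :
    ∃ c m : ℤ, 0 < m ∧ ∀ x, L x ∈ Ico c (c + M) → (x + m • v ∈ D ↔ x ∈ D) := by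
  obtain ⟨j, k, hjk, h⟩ := exists_lt_forall_add_zsmul_mem_iff
    (finite_image_mk_preimage L (stabilizer G D) (finite_Ico 0 M)) v
  refine ⟨L (j • v), k - j, sub_pos.2 hjk, fun x hx ↦ ?_⟩
  have hstrip : L (x - j • v) ∈ Ico 0 M := by
    rw [map_sub]
    exact ⟨sub_nonneg.2 hx.1, sub_lt_iff_lt_add'.2 hx.2⟩
  have hshift : x - j • v + k • v = x + (k - j) • v := by module
  rw [← hshift, ← h _ hstrip, sub_add_cancel]

/-- The periodic continuation of a strip of `D`: for `0 < L w`, the set with period `w` which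
coincides with `D` where `c ≤ L x < c + L w`. For `L w = 0` it is `D`, the quotient being `0`. -/
def periodize (L : G →+ ℤ) (w : G) (c : ℤ) (D : Set G) : Set G :=
  {x | x - ((L x - c) / L w) • w ∈ D}

section periodize

variable {w : G} {c M : ℤ}

theorem mem_periodize {x : G} :
    x ∈ periodize L w c D ↔ x - ((L x - c) / L w) • w ∈ D := Iff.rfl

theorem mem_stabilizer_periodize (hw : L w ≠ 0) : w ∈ stabilizer G (periodize L w c D) := by
  refine mem_stabilizer_iff_add_mem.2 fun x ↦ ?_
  have hdiv : (L (x + w) - c) / L w = (L x - c) / L w + 1 := by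
    rw [map_add, add_sub_right_comm, Int.add_ediv_of_dvd_right dvd_rfl, Int.ediv_self hw]
  have hpt : x + w - ((L x - c) / L w + 1) • w = x - ((L x - c) / L w) • w := by module
  rw [mem_periodize, mem_periodize, hdiv, hpt]

theorem stabilizer_inf_ker_le_stabilizer_periodize :
    stabilizer G D ⊓ L.ker ≤ stabilizer G (periodize L w c D) := by
  rintro g ⟨hg, hLg : L g = 0⟩
  refine mem_stabilizer_iff_add_mem.2 fun x ↦ ?_
  rw [mem_periodize, mem_periodize, map_add, hLg, add_zero, add_sub_right_comm]
  exact mem_stabilizer_iff_add_mem.1 hg _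

theorem finiteIndex_stabilizer_periodize [(stabilizer G D).IsFiniteRelIndex L.ker]
    (hw : L w ≠ 0) : (stabilizer G (periodize L w c D)).FiniteIndex := by
  have := isFiniteRelIndex_of_inf_le
    (stabilizer_inf_ker_le_stabilizer_periodize (D := D) (L := L) (w := w) (c := c))
  exact finiteIndex_of_mem_of_apply_ne_zero (mem_stabilizer_periodize hw) hw

theorem mem_periodize_iff_mem (hw : 0 < L w) (hM : M ≤ L w)
    (hrec : ∀ x, L x ∈ Ico c (c + M) → (x + w ∈ D ↔ x ∈ D)) {x : G}
    (hx : L x ∈ Ico c (c + M + L w)) : x ∈ periodize L w c D ↔ x ∈ D := by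
  obtain ⟨hcx, hxc⟩ := hx
  rw [mem_periodize]
  obtain hlt | hge := lt_or_ge (L x) (c + L w)
  · have hdiv : (L x - c) / L w = 0 := Int.ediv_eq_zero_of_lt (by lia) (by lia)
    rw [hdiv, zero_smul, sub_zero]
  · have hdiv : (L x - c) / L w = 1 := by
      rw [Int.ediv_eq_iff_of_pos hw]
      constructor <;> linarith
    have hback : L (x - w) ∈ Ico c (c + M) := by
      rw [map_sub]
      constructor <;> linarith
    rw [hdiv, one_smul, ← hrec _ hback, sub_add_cancel]

theorem isTiling_periodize {a b : ℤ} (hF : ∀ f ∈ F, L f ∈ Icc a b)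
    (h : IsTiling F D E) (hwE : w ∈ stabilizer G E)
    (hw : 0 < L w) (hab : b - a ≤ L w)
    (hrec : ∀ x, L x ∈ Ico c (c + (b - a)) → (x + w ∈ D ↔ x ∈ D)) :
    IsTiling F (periodize L w c D) E := by
  refine h.of_locally_eq fun e ↦ ?_
  -- Translate `e` by a multiple of `w` so that `e - F` lands where `D` and `periodize` agree.
  let j := -((L e - (c + b)) / L w)
  have hLe : L (e + j • w) - (c + b) = (L e - (c + b)) % L w := by
    rw [map_add, map_zsmul, Int.emod_def, smul_eq_mul]
    ring
  have hnonneg := Int.emod_nonneg (L e - (c + b)) hw.ne'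
  have hlt := Int.emod_lt_of_pos (L e - (c + b)) hw
  refine ⟨e + j • w, (mem_stabilizer_iff_add_mem.1 (zsmul_mem hwE j) e).symm, fun f hf ↦ ?_⟩
  obtain ⟨haf, hfb⟩ := hF f hf
  have hstrip : L (e + j • w - f) ∈ Ico c (c + (b - a) + L w) := by
    rw [map_sub]
    constructor <;> linarith
  rw [← mem_periodize_iff_mem hw hab hrec hstrip, add_sub_right_comm]
  exact (mem_stabilizer_iff_add_mem.1
    (zsmul_mem (mem_stabilizer_periodize hw.ne') j) (e - f)).symm

end periodize

theorem exists_mem_apply_ne_zero {A : Type*} [AddGroup A] [IsAddTorsionFree A] {φ : G →+ A}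
    (hφ : φ ≠ 0) {K : AddSubgroup G} (hK : K.FiniteIndex) : ∃ v ∈ K, φ v ≠ 0 := by
  obtain ⟨u, hu⟩ := DFunLike.ne_iff.1 hφ
  refine ⟨K.index • u, K.nsmul_index_mem u, ?_⟩
  rw [map_nsmul]
  exact fun h0 ↦ hu ((nsmul_eq_zero_iff_right hK.index_ne_zero).1 h0)

theorem exists_isFiniteRelIndex_zmultiples_ker {h : ℤ × ℤ} (hh : h ≠ 0) :
    ∃ L : ℤ × ℤ →+ ℤ, L ≠ 0 ∧ (zmultiples h).IsFiniteRelIndex L.ker := by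
  obtain ⟨a, b⟩ := h
  have hab : a * a + b * b ≠ 0 := fun h0 ↦
    hh (Prod.ext_iff.2 (mul_self_add_mul_self_eq_zero.1 h0))
  let cross : ℤ × ℤ →+ ℤ := a • AddMonoidHom.snd ℤ ℤ - b • AddMonoidHom.fst ℤ ℤ
  let inner : ℤ × ℤ →+ ℤ := a • AddMonoidHom.fst ℤ ℤ + b • AddMonoidHom.snd ℤ ℤ
  let N := zmultiples (a * a + b * b)
  let K := N.comap inner
  refine ⟨cross, fun h0 ↦ hab ?_, ?_⟩
  · simpa [cross] using DFunLike.congr_fun h0 (-b, a)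
  have hK : K.IsFiniteRelIndex cross.ker := by
    have : N.FiniteIndex := ⟨by rwa [Int.index_zmultiples, Int.natAbs_ne_zero]⟩
    have : N.IsFiniteRelIndex (cross.ker.map inner) := isFiniteRelIndex_of_finiteIndex
    exact ⟨relIndex_comap N inner cross.ker ▸ relIndex_ne_zero⟩
  have hle : K ⊓ cross.ker ≤ zmultiples (a, b) := by
    rintro ⟨s, t⟩ ⟨hinner, hcross⟩
    obtain ⟨k, hk : k * (a * a + b * b) = a * s + b * t⟩ := hinner
    replace hcross : a * t - b * s = 0 := hcross
    have hs : k * a = s := mul_left_cancel₀ hab (by linear_combination a * hk + b * hcross)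
    have ht : k * b = t := mul_left_cancel₀ hab (by linear_combination b * hk - a * hcross)
    exact ⟨k, Prod.ext hs ht⟩
  exact isFiniteRelIndex_of_inf_le hle

theorem isPeriodicSet_iff {E : Set (ℤ × ℤ)} :
    IsPeriodicSet E ↔ (stabilizer (ℤ × ℤ) E).FiniteIndex := by
  constructor
  · rintro ⟨Λ, hΛ, hE⟩
    exact finiteIndex_of_le fun g hg ↦ mem_stabilizer_iff_add_mem.2 (hE g hg)
  · exact fun hE ↦ ⟨_, hE, fun g hg ↦ mem_stabilizer_iff_add_mem.1 hg⟩

theorem IsOnePeriodicSet.exists_isFiniteRelIndex_stabilizer_ker {D : Set (ℤ × ℤ)}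
    (hD : IsOnePeriodicSet D) :
    ∃ L : ℤ × ℤ →+ ℤ, L ≠ 0 ∧ (stabilizer (ℤ × ℤ) D).IsFiniteRelIndex L.ker := by
  obtain ⟨h, hh, hhD⟩ := hD
  obtain ⟨L, hL, _⟩ := exists_isFiniteRelIndex_zmultiples_ker hh
  have hle : zmultiples h ≤ stabilizer (ℤ × ℤ) D :=
    zmultiples_le_of_mem (mem_stabilizer_iff_add_mem.2 hhD)
  exact ⟨L, hL, isFiniteRelIndex_of_le_left _ hle⟩

theorem tileOplus_iff_isTiling {F D E : Set (ℤ × ℤ)} : TileOplus F D E ↔ IsTiling F D E := by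
  constructor
  · rintro ⟨hmaps, huniq⟩
    refine ⟨fun p hp ↦ hmaps _ hp.1 _ hp.2, fun p hp q hq hpq ↦ ?_, fun e he ↦ ?_⟩
    · exact (huniq _ (hmaps _ hp.1 _ hp.2)).unique ⟨hp.1, hp.2, rfl⟩ ⟨hq.1, hq.2, hpq.symm⟩
    · obtain ⟨p, hF, hD, hp⟩ := (huniq e he).exists
      exact ⟨p, ⟨hF, hD⟩, hp⟩
  · rintro ⟨hmaps, hinj, hsurj⟩
    refine ⟨fun f hf d hd ↦ hmaps (mk_mem_prod hf hd), fun e he ↦ ?_⟩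
    obtain ⟨p, hp, hpe⟩ := hsurj he
    exact ⟨p, ⟨hp.1, hp.2, hpe⟩, fun q ⟨hF, hD, hq⟩ ↦ hinj ⟨hF, hD⟩ hp (hq.trans hpe.symm)⟩

theorem periodic_tiling_of_onePeriodic_general (hF : F.Finite) (hFD : IsTiling F D E)
    (hD : (stabilizer G D).IsFiniteRelIndex L.ker) {v : G} (hvE : v ∈ stabilizer G E)
    (hv : L v ≠ 0) :
    ∃ D' : Set G, (stabilizer G D').FiniteIndex ∧ IsTiling F D' E := by
  obtain ⟨a, ha⟩ := (hF.image L).bddBelow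
  obtain ⟨b, hb⟩ := (hF.image L).bddAbove
  obtain ⟨n, hn⟩ : ∃ n : ℤ, |b - a| < n * L v :=
    ⟨(|b - a| + 1) * L v, by nlinarith [abs_nonneg (b - a), mul_self_pos.2 hv]⟩
  obtain ⟨c, m, hm, hrec⟩ := exists_recurrent_strip (D := D) (L := L) (n • v) (b - a)
  have hw : |b - a| < L (m • n • v) := by
    rw [map_zsmul, map_zsmul, smul_eq_mul, smul_eq_mul]
    nlinarith [abs_nonneg (b - a)]
  have hw₀ : 0 < L (m • n • v) := (abs_nonneg _).trans_lt hw
  exact ⟨periodize L (m • n • v) c D, finiteIndex_stabilizer_periodize hw₀.ne',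
    isTiling_periodize (fun f hf ↦ ⟨ha (mem_image_of_mem L hf), hb (mem_image_of_mem L hf)⟩) hFD
      (zsmul_mem (zsmul_mem hvE n) m) hw₀ ((le_abs_self _).trans hw.le) hrec⟩

end

/-- If `F, D, E ⊆ ℤ²` with `F` finite and `F ⊕ D = E`, and `D` is 1-periodic while `E`
is periodic, then there exists a periodic set `D' ⊆ ℤ²` with `F ⊕ D' = E`. -/
theorem periodic_tiling_of_onePeriodic (F D E : Set (ℤ × ℤ)) (hF : F.Finite)
    (hFD : TileOplus F D E) (hD : IsOnePeriodicSet D) (hE : IsPeriodicSet E) :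
    ∃ D' : Set (ℤ × ℤ), IsPeriodicSet D' ∧ TileOplus F D' E := by
  obtain ⟨L, hL, hDL⟩ := hD.exists_isFiniteRelIndex_stabilizer_ker
  obtain ⟨v, hvE, hv⟩ := exists_mem_apply_ne_zero hL (isPeriodicSet_iff.1 hE)
  simpa only [isPeriodicSet_iff, tileOplus_iff_isTiling] using
    periodic_tiling_of_onePeriodic_general hF (tileOplus_iff_isTiling.1 hFD) hDL hvE hv
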